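/- Let k ≥ 2 be an integer and let α > 1/k and r > 0 be real constants such that p_cr := 1 - e^{-α/r} satisfies p_cr ≤ (k-1)/k. For a random instance P drawn from RB(k,n,α,r,p) with constant p ∈ (0,1), the probability that P is satisfiable tends, as n → ∞, to 1 if p < p_cr and to 0 if p > p_cr. -/

import Mathlib

namespace RB

/-- A (raw) constraint over `n` variables with common domain `Fin d`:
a scope (set of variables) together with a set of forbidden tuples,
i.e. forbidden functions from the scope to the domain. -/
abbrev Constraint (n d : ℕ) : Type := Σ s : Finset (Fin n), Finset (↥s → Fin d)

/-- A constraint of model RB: scope of exactly `k` variables and exactly `q` forbidden tuples. -/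
abbrev ValidConstraint (k n d q : ℕ) : Type :=
  {c : Constraint n d // c.1.card = k ∧ c.2.card = q}

/-- An instance of model RB: a sequence of `m` constraints (chosen with repetition). -/
abbrev Instance (k n d q m : ℕ) : Type := Fin m → ValidConstraint k n d q

/-- An assignment satisfies a constraint iff the tuple it induces on the scope is not forbidden. -/
def satisfies {n d : ℕ} (a : Fin n → Fin d) (c : Constraint n d) : Prop :=
  (fun i : ↥c.1 => a i.1) ∉ c.2

/-- An assignment satisfies an instance iff it satisfies all its constraints. -/
def satInstance {k n d q m : ℕ} (a : Fin n → Fin d) (P : Instance k n d q m) : Prop :=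
  ∀ i : Fin m, satisfies a (P i).1

open scoped Classical in
/-- The probability (uniform over instances, i.e. constraints chosen independently,
uniformly and with repetition) that a random instance is satisfiable. -/
noncomputable def prSat (k n d q m : ℕ) : ℝ :=
  ((Finset.univ.filter fun P : Instance k n d q m =>
      ∃ a : Fin n → Fin d, satInstance a P).card : ℝ)
    / (Fintype.card (Instance k n d q m))

/-- Domain size `d = ⌈n^α⌉`. -/
noncomputable def dOf (α : ℝ) (n : ℕ) : ℕ := ⌈(n : ℝ) ^ α⌉₊

/-- Number of constraints `m = ⌈r · n · ln n⌉`. -/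
noncomputable def mOf (r : ℝ) (n : ℕ) : ℕ := ⌈r * n * Real.log n⌉₊

/-- Number of forbidden tuples `q = ⌈p · d^k⌉`. -/
noncomputable def qOf (p : ℝ) (k d : ℕ) : ℕ := ⌈p * (d : ℝ) ^ k⌉₊

/-- Probability that a random instance of `RB(k,n,α,r,p)` is satisfiable. -/
noncomputable def prSatRB (k : ℕ) (α r p : ℝ) (n : ℕ) : ℝ :=
  prSat k n (dOf α n) (qOf p k (dOf α n)) (mOf r n)

end RB

open Filter Topology

/-!
Write `N` for the number of solutions. The constraints are independent, so `E N = dⁿ wᵐ` with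
`w = 1 - q / dᵏ`, and `E N → 0` as soon as `p > 1 - exp (-α / r)`; this is the unsatisfiable side.

For the satisfiable side, `P(N > 0) ≥ (E N)² / E N²`. Two assignments that agree on `s` variables
satisfy a random constraint jointly with probability at most `w² (1 + c (s / n)ᵏ)`, where `1 + c` is
slightly larger than `1 / (1 - p)`. Hence `E N² / (E N)²` is at most the expectation of
`(1 + c (S / n)ᵏ)ᵐ` for a binomial `S` with parameters `n` and `1 / d`, and this expectation tends
to `1`. For `S ≤ n ^ β` with `β < 1 - 1 / k` the integrand is close to `1`. For `S = s ≥ n ^ β` the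
terms are at most `(o(1)) ^ s`: if `s / n` is small because `β > 1 - α`, and otherwise because
`x ↦ log (1 + c xᵏ)` is convex on `[0, 1]`, hence at most `x log (1 + c)`, while
`r log (1 + c) < α`. Convexity requires `c ≤ k - 1`, which is where `p < (k - 1) / k` enters; the
window for `β` is nonempty exactly because `α > 1 / k`.
-/

namespace RB

open Finset

section Counting

theorem card_biUnion_inter_sum_sq {α Ω : Type*} [DecidableEq Ω] (s : Finset α)
    (E : α → Finset Ω) :
    ∑ ω ∈ s.biUnion E, #{a ∈ s | ω ∈ E a} ^ 2 = ∑ a ∈ s, ∑ b ∈ s, #(E a ∩ E b) := by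
  have card_inter (a : α) (ha : a ∈ s) (b : α) :
      #(E a ∩ E b) = ∑ ω ∈ s.biUnion E, if ω ∈ E a ∧ ω ∈ E b then 1 else 0 := by
    rw [← card_filter]
    congr 1
    ext ω
    simp only [mem_inter, mem_filter, mem_biUnion]
    exact ⟨fun h => ⟨⟨a, ha, h.1⟩, h⟩, And.right⟩
  rw [sum_congr rfl fun a ha => sum_congr rfl fun b _ => card_inter a ha b,
    sum_congr rfl fun a _ => sum_comm, sum_comm]
  refine sum_congr rfl fun ω _ => ?_
  simp only [sq, card_filter, sum_mul_sum, ite_and, ite_mul, one_mul, zero_mul]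

theorem sq_sum_card_le_card_biUnion_mul {α Ω : Type*} [DecidableEq Ω] (s : Finset α)
    (E : α → Finset Ω) :
    (∑ a ∈ s, #(E a)) ^ 2 ≤ #(s.biUnion E) * ∑ a ∈ s, ∑ b ∈ s, #(E a ∩ E b) := by
  have sum_card : ∑ a ∈ s, #(E a) = ∑ ω ∈ s.biUnion E, #{a ∈ s | ω ∈ E a} := by
    refine (sum_congr rfl fun a ha => ?_).trans
      (sum_card_bipartiteAbove_eq_sum_card_bipartiteBelow fun a ω => ω ∈ E a)
    rw [bipartiteAbove, filter_mem_eq_inter, inter_eq_right.2 (subset_biUnion_of_mem E ha)]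
  rw [sum_card, ← card_biUnion_inter_sum_sq]
  exact sq_sum_le_card_mul_sum_sq

theorem sum_powersetCard_ite_subset {α : Type*} [DecidableEq α] {s t : Finset α} (h : t ⊆ s)
    (k x y : ℕ) :
    ∑ u ∈ s.powersetCard k, (if u ⊆ t then x else y) =
      (#t).choose k * x + ((#s).choose k - (#t).choose k) * y := by
  have filter_subset_eq : {u ∈ s.powersetCard k | u ⊆ t} = t.powersetCard k := by
    ext u
    simp only [mem_filter, mem_powersetCard]
    exact ⟨fun hu => ⟨hu.2, hu.1.2⟩, fun hu => ⟨⟨hu.1.trans h, hu.2⟩, hu.1⟩⟩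
  rw [sum_ite, filter_not, filter_subset_eq, sum_const, sum_const,
    card_sdiff_of_subset (powersetCard_mono h), card_powersetCard, card_powersetCard,
    smul_eq_mul, smul_eq_mul]

variable {ι κ : Type*} [Fintype ι] [DecidableEq κ]

/-- The set of variables on which two assignments agree. Its size decides how strongly the events
that the one and the other is a solution are correlated. -/
def agreement (a b : ι → κ) : Finset ι := {i | a i = b i}

theorem subset_agreement_iff {a b : ι → κ} {s : Finset ι} :
    s ⊆ agreement a b ↔ s.restrict a = s.restrict b := by
  simp [subset_iff, agreement, funext_iff]

variable [DecidableEq ι]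

theorem card_image_restrict_pair (a b : ι → κ) (s : Finset ι) :
    #(({a, b} : Finset (ι → κ)).image s.restrict) = if s ⊆ agreement a b then 1 else 2 := by
  simp only [image_insert, image_singleton, subset_agreement_iff]
  split_ifs with h
  · rw [h, pair_eq_singleton, card_singleton]
  · exact card_pair h

theorem card_filter_agreement_eq [Fintype κ] (a : ι → κ) (s : Finset ι) :
    #{b | agreement a b = s} = (Fintype.card κ - 1) ^ (Fintype.card ι - #s) := by
  have filter_eq : ({b | agreement a b = s} : Finset (ι → κ)) =
      Fintype.piFinset fun i => if i ∈ s then {a i} else univ.erase (a i) := by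
    ext b
    simp only [mem_filter_univ, Fintype.mem_piFinset, Finset.ext_iff, agreement]
    refine forall_congr' fun i => ?_
    split_ifs with hi <;> simp [hi, eq_comm]
  simp only [filter_eq, Fintype.card_piFinset, apply_ite card, card_singleton,
    card_erase_of_mem (mem_univ _), card_univ, prod_ite, prod_const, one_pow, one_mul]
  rw [filter_not, filter_mem_eq_inter, univ_inter, card_univ_sdiff]

theorem sum_card_agreement [Fintype κ] (a : ι → κ) (G : ℕ → ℝ) :
    ∑ b, G #(agreement a b) = ∑ s ∈ range (Fintype.card ι + 1),
      ((Fintype.card ι).choose s : ℝ) * (Fintype.card κ - 1 : ℕ) ^ (Fintype.card ι - s) * G s := by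
  have sum_fiber (S : Finset ι) : ∑ b with agreement a b = S, G #(agreement a b) =
      (Fintype.card κ - 1 : ℕ) ^ (Fintype.card ι - #S) * G #S := by
    rw [sum_congr rfl fun b hb => by rw [(mem_filter.1 hb).2], sum_const,
      card_filter_agreement_eq, nsmul_eq_mul, Nat.cast_pow]
  rw [← sum_fiberwise univ (agreement a), sum_congr rfl fun S _ => sum_fiber S, ← powerset_univ,
    sum_powerset_apply_card
      fun s => ((Fintype.card κ - 1 : ℕ) : ℝ) ^ (Fintype.card ι - s) * G s]
  simp only [card_univ, nsmul_eq_mul, mul_assoc]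

end Counting

section BinomialRatios

theorem choose_pred_div_choose {D q : ℕ} (hq : q ≤ D) :
    ((D - 1).choose q : ℝ) / D.choose q = 1 - (q : ℝ) / D := by
  cases D with
  | zero => simp [Nat.le_zero.1 hq]
  | succ E =>
    have h : (E.choose q : ℝ) * (E + 1) = (E + 1).choose q * ((E + 1 : ℕ) - q) := by
      exact_mod_cast congrArg (Nat.cast (R := ℝ)) (Nat.choose_mul_succ_eq E q)
    have hC : ((E + 1).choose q : ℝ) ≠ 0 := by exact_mod_cast (Nat.choose_pos hq).ne'
    rw [Nat.add_sub_cancel, div_eq_iff hC]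
    field_simp
    push_cast at h ⊢
    linarith

theorem choose_sub_two_div_choose_le {D q : ℕ} (hq : q ≤ D) :
    ((D - 2).choose q : ℝ) / D.choose q ≤ (1 - (q : ℝ) / D) ^ 2 := by
  rcases q.eq_zero_or_pos with rfl | hpos
  · simp
  rcases hq.eq_or_lt with rfl | hlt
  · rw [Nat.choose_eq_zero_of_lt (by omega), Nat.cast_zero, zero_div]
    exact sq_nonneg _
  · have hC : ((D - 1).choose q : ℝ) ≠ 0 := by
      exact_mod_cast (Nat.choose_pos (Nat.le_sub_one_of_lt hlt)).ne'
    have hD : (0 : ℝ) < D := by exact_mod_cast (by omega : 0 < D)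
    have hw : 0 ≤ 1 - (q : ℝ) / D := sub_nonneg.2 (div_le_one_of_le₀ (by exact_mod_cast hq) hD.le)
    calc ((D - 2).choose q : ℝ) / D.choose q
        = ((D - 1 - 1).choose q / (D - 1).choose q) * ((D - 1).choose q / D.choose q) := by
          rw [div_mul_div_cancel₀ hC, Nat.sub_sub]
      _ = (1 - (q : ℝ) / (D - 1 : ℕ)) * (1 - (q : ℝ) / D) := by
          rw [choose_pred_div_choose (Nat.le_sub_one_of_lt hlt), choose_pred_div_choose hq]
      _ ≤ (1 - (q : ℝ) / D) ^ 2 := by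
          rw [sq]
          gcongr
          · exact_mod_cast Nat.sub_pos_of_lt (by omega : 1 < D)
          · exact Nat.sub_le D 1

theorem descFactorial_mul_pow_le {s n : ℕ} (h : s ≤ n) (k : ℕ) :
    s.descFactorial k * n ^ k ≤ n.descFactorial k * s ^ k := by
  induction k with
  | zero => simp
  | succ k ih =>
    have hstep : (s - k) * n ≤ (n - k) * s := by
      rw [Nat.sub_mul, Nat.sub_mul, mul_comm n s]
      exact Nat.sub_le_sub_left (Nat.mul_le_mul_left _ h) _
    calc s.descFactorial (k + 1) * n ^ (k + 1)
        = ((s - k) * n) * (s.descFactorial k * n ^ k) := by rw [Nat.descFactorial_succ]; ring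
      _ ≤ ((n - k) * s) * (n.descFactorial k * s ^ k) := Nat.mul_le_mul hstep ih
      _ = n.descFactorial (k + 1) * s ^ (k + 1) := by rw [Nat.descFactorial_succ]; ring

theorem choose_div_choose_le_div_pow {s n k : ℕ} (hs : s ≤ n) (hk : k ≤ n) :
    (s.choose k : ℝ) / n.choose k ≤ ((s : ℝ) / n) ^ k := by
  rcases n.eq_zero_or_pos with rfl | hn
  · simp [Nat.le_zero.1 hs, Nat.le_zero.1 hk]
  · have h : s.choose k * n ^ k ≤ n.choose k * s ^ k := by
      have := descFactorial_mul_pow_le hs k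
      simp only [Nat.descFactorial_eq_factorial_mul_choose, mul_assoc] at this
      exact Nat.le_of_mul_le_mul_left this k.factorial_pos
    have hC : (0 : ℝ) < n.choose k := by exact_mod_cast Nat.choose_pos hk
    rw [div_pow, div_le_div_iff₀ hC (by positivity), mul_comm ((s : ℝ) ^ k)]
    exact_mod_cast h

end BinomialRatios

section Moments

variable {n d : ℕ}

open scoped Classical in
/-- The constraints satisfied by every assignment in `A`. -/
noncomputable def satisfiedConstraints (k q : ℕ) (A : Finset (Fin n → Fin d)) :
    Finset (ValidConstraint k n d q) :=
  {c | ∀ a ∈ A, satisfies a c.1}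

/-- The probability that one random constraint is satisfied by every assignment in `A`. -/
noncomputable def satProb (k q : ℕ) (A : Finset (Fin n → Fin d)) : ℝ :=
  #(satisfiedConstraints k q A) / Fintype.card (ValidConstraint k n d q)

theorem mem_satisfiedConstraints {k q : ℕ} {A : Finset (Fin n → Fin d)}
    {c : ValidConstraint k n d q} :
    c ∈ satisfiedConstraints k q A ↔ ∀ a ∈ A, satisfies a c.1 := by
  classical exact mem_filter_univ c

theorem card_satisfiedConstraints (k q : ℕ) (A : Finset (Fin n → Fin d)) :
    #(satisfiedConstraints k q A) =
      ∑ s ∈ (univ : Finset (Fin n)).powersetCard k, (d ^ k - #(A.image s.restrict)).choose q := by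
  have card_eq : #(satisfiedConstraints k q A) =
      #(((univ : Finset (Fin n)).powersetCard k).sigma
        fun s => (A.image s.restrict)ᶜ.powersetCard q) := by
    refine card_bij (fun c _ => c.1) ?_ (fun _ _ _ _ => Subtype.ext) ?_
    · rintro ⟨⟨s, t⟩, hs, ht⟩ h
      simp only [mem_sigma, mem_powersetCard, subset_univ, true_and]
      refine ⟨hs, fun f hf => ?_, ht⟩
      simp only [mem_compl, mem_image, not_exists, not_and]
      rintro a ha rfl
      exact mem_satisfiedConstraints.1 h a ha hf
    · rintro ⟨s, t⟩ h
      simp only [mem_sigma, mem_powersetCard, subset_univ, true_and] at h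
      refine ⟨⟨⟨s, t⟩, h.1, h.2.2⟩, mem_satisfiedConstraints.2 fun a ha hat => ?_, rfl⟩
      exact mem_compl.1 (h.2.1 hat) (mem_image_of_mem _ ha)
  rw [card_eq, card_sigma]
  refine sum_congr rfl fun s hs => ?_
  rw [card_powersetCard, card_compl, Fintype.card_fun, Fintype.card_fin, Fintype.card_coe,
    (mem_powersetCard.1 hs).2]

theorem card_validConstraint (k n d q : ℕ) :
    Fintype.card (ValidConstraint k n d q) = n.choose k * (d ^ k).choose q := by
  simpa [satisfiedConstraints] using card_satisfiedConstraints k q (∅ : Finset (Fin n → Fin d))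

theorem satProb_singleton {k q : ℕ} (hk : k ≤ n) (hq : q ≤ d ^ k) (a : Fin n → Fin d) :
    satProb k q {a} = 1 - (q : ℝ) / (d : ℝ) ^ k := by
  have hC : (n.choose k : ℝ) ≠ 0 := by exact_mod_cast (Nat.choose_pos hk).ne'
  have hcount : #(satisfiedConstraints k q {a}) = n.choose k * (d ^ k - 1).choose q := by
    simp [card_satisfiedConstraints]
  rw [satProb, hcount, card_validConstraint, Nat.cast_mul, Nat.cast_mul, mul_div_mul_left _ _ hC,
    choose_pred_div_choose hq, Nat.cast_pow]

theorem satProb_pair {k q : ℕ} (hk : k ≤ n) (a b : Fin n → Fin d) :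
    satProb k q {a, b} =
      ((#(agreement a b)).choose k / n.choose k : ℝ) * ((d ^ k - 1).choose q / (d ^ k).choose q) +
      (1 - ((#(agreement a b)).choose k / n.choose k : ℝ)) *
        ((d ^ k - 2).choose q / (d ^ k).choose q) := by
  have hC : (n.choose k : ℝ) ≠ 0 := by exact_mod_cast (Nat.choose_pos hk).ne'
  have hle : (#(agreement a b)).choose k ≤ n.choose k :=
    Nat.choose_le_choose k (card_finset_fin_le _)
  have hcount : #(satisfiedConstraints k q {a, b}) =
      (#(agreement a b)).choose k * (d ^ k - 1).choose q +
        (n.choose k - (#(agreement a b)).choose k) * (d ^ k - 2).choose q := by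
    simp only [card_satisfiedConstraints, card_image_restrict_pair,
      apply_ite fun j => (d ^ k - j).choose q, sum_powersetCard_ite_subset (subset_univ _),
      card_univ, Fintype.card_fin]
  rw [satProb, hcount, card_validConstraint]
  push_cast [hle]
  field_simp

theorem satProb_pair_le {k q : ℕ} (hk : k ≤ n) (hq : q ≤ d ^ k) {c : ℝ} (hc0 : 0 ≤ c)
    (hc : 1 ≤ (1 + c) * (1 - (q : ℝ) / (d : ℝ) ^ k)) (a b : Fin n → Fin d) :
    satProb k q {a, b} ≤
      (1 - (q : ℝ) / (d : ℝ) ^ k) ^ 2 * (1 + c * ((#(agreement a b) : ℝ) / n) ^ k) := by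
  have hx := choose_div_choose_le_div_pow (card_finset_fin_le (agreement a b)) hk
  have hw2 := choose_sub_two_div_choose_le hq
  rw [satProb_pair hk, choose_pred_div_choose hq]
  push_cast at hw2 ⊢
  set x : ℝ := (#(agreement a b)).choose k / n.choose k
  set w : ℝ := 1 - (q : ℝ) / (d : ℝ) ^ k
  have : 0 ≤ x := by positivity
  have hx1 : x ≤ 1 := div_le_one_of_le₀
    (by exact_mod_cast Nat.choose_le_choose k (card_finset_fin_le _)) (Nat.cast_nonneg _)
  have hw : 0 ≤ w := by nlinarith
  calc x * w + (1 - x) * ((d ^ k - 2).choose q / (d ^ k).choose q)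
      ≤ x * ((1 + c) * w * w) + (1 - x) * w ^ 2 := by
        gcongr
        exact le_mul_of_one_le_left hw hc
    _ = w ^ 2 * (1 + c * x) := by ring
    _ ≤ w ^ 2 * (1 + c * ((#(agreement a b) : ℝ) / n) ^ k) := by gcongr

theorem prSat_nonneg (k n d q m : ℕ) : 0 ≤ prSat k n d q m := by
  unfold prSat
  positivity

theorem prSat_le_one (k n d q m : ℕ) : prSat k n d q m ≤ 1 :=
  div_le_one_of_le₀ (by exact_mod_cast card_le_univ _) (Nat.cast_nonneg _)

open scoped Classical in
theorem prSat_eq_card_biUnion (k n d q m : ℕ) :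
    prSat k n d q m =
      #(univ.biUnion fun a : Fin n → Fin d =>
        Fintype.piFinset fun _ : Fin m => satisfiedConstraints k q {a}) /
      (Fintype.card (ValidConstraint k n d q) : ℝ) ^ m := by
  rw [prSat, Fintype.card_fun, Fintype.card_fin, Nat.cast_pow]
  congr 3
  ext P
  rw [mem_filter]
  simp [satInstance, mem_satisfiedConstraints]

theorem prSat_le_sum_satProb_pow (k n d q m : ℕ) :
    prSat k n d q m ≤ ∑ a : Fin n → Fin d, satProb k q {a} ^ m := by
  classical
  simp only [prSat_eq_card_biUnion, satProb, div_pow, ← sum_div]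
  gcongr
  have h := card_biUnion_le (s := univ) (t := fun a : Fin n → Fin d =>
    Fintype.piFinset fun _ : Fin m => satisfiedConstraints k q {a})
  simp only [Fintype.card_piFinset_const] at h
  exact_mod_cast h

theorem sq_sum_satProb_pow_le (k n d q m : ℕ) :
    (∑ a : Fin n → Fin d, satProb k q {a} ^ m) ^ 2 ≤
      prSat k n d q m * ∑ a : Fin n → Fin d, ∑ b, satProb k q {a, b} ^ m := by
  classical
  have inter_eq (a b : Fin n → Fin d) : satisfiedConstraints k q {a} ∩ satisfiedConstraints k q {b}
      = satisfiedConstraints k q {a, b} := by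
    ext c
    simp [mem_satisfiedConstraints]
  have h := sq_sum_card_le_card_biUnion_mul univ fun a : Fin n → Fin d =>
    Fintype.piFinset fun _ : Fin m => satisfiedConstraints k q {a}
  simp only [← Fintype.piFinset_inter, inter_eq, Fintype.card_piFinset_const] at h
  simp only [prSat_eq_card_biUnion, satProb, div_pow, ← sum_div, div_mul_div_comm, ← sq]
  gcongr
  exact_mod_cast h

theorem prSat_le_first_moment {k n d q : ℕ} (m : ℕ) (hk : k ≤ n) (hq : q ≤ d ^ k) :
    prSat k n d q m ≤ (d : ℝ) ^ n * (1 - (q : ℝ) / (d : ℝ) ^ k) ^ m := by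
  simpa [satProb_singleton hk hq] using prSat_le_sum_satProb_pow k n d q m

/-- The expectation of `(1 + c (S / n) ^ k) ^ m` when `S` is binomially distributed with parameters
`n` and `x`. For `x = 1 / d` it is the average over pairs of assignments, `S` being the size of
their agreement set, and bounds the second moment of the number of solutions divided by the square
of the first. -/
noncomputable def agreementMoment (k n m : ℕ) (c x : ℝ) : ℝ :=
  ∑ s ∈ range (n + 1),
    (n.choose s : ℝ) * x ^ s * (1 - x) ^ (n - s) * (1 + c * ((s : ℝ) / n) ^ k) ^ m

theorem sum_pow_agreement_eq (k m : ℕ) (hd : 0 < d) (c : ℝ) (a : Fin n → Fin d) :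
    ∑ b, (1 + c * ((#(agreement a b) : ℝ) / n) ^ k) ^ m =
      (d : ℝ) ^ n * agreementMoment k n m c (1 / d) := by
  have hd0 : (d : ℝ) ≠ 0 := by exact_mod_cast hd.ne'
  rw [sum_card_agreement a fun s => (1 + c * ((s : ℝ) / n) ^ k) ^ m, agreementMoment, mul_sum]
  simp only [Fintype.card_fin]
  refine sum_congr rfl fun s hs => ?_
  have hpow : (d : ℝ) ^ n = d ^ s * d ^ (n - s) := by
    rw [← pow_add, Nat.add_sub_cancel' (Nat.le_of_lt_succ (mem_range.1 hs))]
  simp only [one_sub_div hd0, div_pow, one_pow, hpow, Nat.cast_pred hd]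
  field_simp

theorem one_le_prSat_mul_agreementMoment {k n d q : ℕ} (m : ℕ) (hd : 0 < d) (hk : k ≤ n)
    (hq : q ≤ d ^ k) {c : ℝ} (hc0 : 0 ≤ c) (hc : 1 ≤ (1 + c) * (1 - (q : ℝ) / (d : ℝ) ^ k)) :
    1 ≤ prSat k n d q m * agreementMoment k n m c (1 / d) := by
  set w : ℝ := 1 - (q : ℝ) / (d : ℝ) ^ k
  have hw : 0 < w := by nlinarith
  have : (0 : ℝ) < d := by exact_mod_cast hd
  have second_moment_le : ∑ a : Fin n → Fin d, ∑ b, satProb k q {a, b} ^ m ≤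
      ((d : ℝ) ^ n * w ^ m) ^ 2 * agreementMoment k n m c (1 / d) :=
    calc ∑ a : Fin n → Fin d, ∑ b, satProb k q {a, b} ^ m
        ≤ ∑ a : Fin n → Fin d, ∑ b,
            (w ^ 2 * (1 + c * ((#(agreement a b) : ℝ) / n) ^ k)) ^ m := by
          gcongr with a _ b _
          · exact div_nonneg (Nat.cast_nonneg _) (Nat.cast_nonneg _)
          · exact satProb_pair_le hk hq hc0 hc a b
      _ = ((d : ℝ) ^ n * w ^ m) ^ 2 * agreementMoment k n m c (1 / d) := by
          simp only [mul_pow, ← mul_sum, sum_pow_agreement_eq k m hd]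
          simp only [sum_const, card_univ, Fintype.card_fun, Fintype.card_fin, nsmul_eq_mul]
          push_cast
          rw [pow_right_comm w]
          ring
  have h := sq_sum_satProb_pow_le k n d q m
  simp only [satProb_singleton hk hq, sum_const, card_univ, Fintype.card_fun, Fintype.card_fin,
    nsmul_eq_mul, Nat.cast_pow] at h
  refine le_of_mul_le_mul_left ?_ (show 0 < ((d : ℝ) ^ n * w ^ m) ^ 2 by positivity)
  calc ((d : ℝ) ^ n * w ^ m) ^ 2 * 1
      ≤ prSat k n d q m * ∑ a : Fin n → Fin d, ∑ b, satProb k q {a, b} ^ m := by simpa using h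
    _ ≤ prSat k n d q m * (((d : ℝ) ^ n * w ^ m) ^ 2 * agreementMoment k n m c (1 / d)) :=
        mul_le_mul_of_nonneg_left second_moment_le (prSat_nonneg k n d q m)
    _ = _ := by ring

end Moments

section Analysis

theorem convexOn_log_one_add_mul_pow {k : ℕ} (hk : 2 ≤ k) {c : ℝ} (hc0 : 0 ≤ c)
    (hc : c ≤ k - 1) : ConvexOn ℝ (Set.Icc 0 1) fun x => Real.log (1 + c * x ^ k) := by
  obtain ⟨j, rfl⟩ := Nat.exists_eq_add_of_le' hk
  have one_add_pos {x : ℝ} (hx : 0 ≤ x) : 0 < 1 + c * x ^ (j + 2) := by positivity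
  have hasDerivAt_inner (x : ℝ) :
      HasDerivAt (fun x => 1 + c * x ^ (j + 2)) (c * ((j + 2) * x ^ (j + 1))) x := by
    simpa using ((hasDerivAt_pow (j + 2) x).const_mul c).const_add 1
  have hasDerivAt_inner' (x : ℝ) : HasDerivAt (fun x => c * ((j + 2) * x ^ (j + 1)))
      (c * ((j + 2) * ((j + 1) * x ^ j))) x := by
    simpa using ((hasDerivAt_pow (j + 1) x).const_mul ((j : ℝ) + 2)).const_mul c
  refine convexOn_of_hasDerivWithinAt2_nonneg (convex_Icc 0 1)
    (fun x hx => ((hasDerivAt_inner x).log (one_add_pos hx.1).ne').continuousAt.continuousWithinAt)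
    (fun x hx => ((hasDerivAt_inner x).log
      (one_add_pos (interior_subset hx).1).ne').hasDerivWithinAt)
    (fun x hx => ((hasDerivAt_inner' x).fun_div (hasDerivAt_inner x)
      (one_add_pos (interior_subset hx).1).ne').hasDerivWithinAt) fun x hx => ?_
  obtain ⟨hx0, hx1⟩ := interior_subset hx
  have hcx : c * x ^ (j + 2) ≤ j + 1 := by
    have := mul_le_of_le_one_right hc0 (pow_le_one₀ (n := j + 2) hx0 hx1)
    push_cast at hc
    linarith
  calc (0 : ℝ) ≤ (j + 2) * c * x ^ j * (j + 1 - c * x ^ (j + 2)) / (1 + c * x ^ (j + 2)) ^ 2 := by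
        have := sub_nonneg.2 hcx
        positivity
    _ = _ := by ring

theorem log_one_add_mul_pow_le {k : ℕ} (hk : 2 ≤ k) {c x : ℝ} (hc0 : 0 ≤ c) (hc : c ≤ k - 1)
    (hx0 : 0 ≤ x) (hx1 : x ≤ 1) : Real.log (1 + c * x ^ k) ≤ Real.log (1 + c) * x := by
  have h := (convexOn_log_one_add_mul_pow hk hc0 hc).2 (Set.left_mem_Icc.2 zero_le_one)
    (Set.right_mem_Icc.2 zero_le_one) (sub_nonneg.2 hx1) hx0 (by ring)
  simpa [zero_pow (show k ≠ 0 by omega), mul_comm x] using h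

theorem log_one_add_mul_pow_le_of_le {k : ℕ} (hk : 2 ≤ k) {c x ε : ℝ} (hc : 0 ≤ c)
    (hx0 : 0 ≤ x) (hx1 : x ≤ 1) (hx : x ≤ ε) : Real.log (1 + c * x ^ k) ≤ c * ε * x :=
  calc Real.log (1 + c * x ^ k) ≤ c * x ^ k := by
        have := Real.log_le_sub_one_of_pos (show 0 < 1 + c * x ^ k by positivity)
        linarith
    _ ≤ c * x ^ 2 := by
        gcongr c * ?_
        exact pow_le_pow_of_le_one hx0 hx1 hk
    _ = c * x * x := by ring
    _ ≤ c * ε * x := by gcongr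

theorem choose_le_exp_one_mul_div_pow (n s : ℕ) :
    (n.choose s : ℝ) ≤ (Real.exp 1 * (n / s)) ^ s := by
  rcases s.eq_zero_or_pos with rfl | hs
  · simp
  have hexp : (s : ℝ) ^ s ≤ Real.exp 1 ^ s * s.factorial := by
    rw [← Real.exp_nat_mul, mul_one, ← div_le_iff₀ (by positivity)]
    exact Real.pow_div_factorial_le_exp _ s.cast_nonneg s
  calc (n.choose s : ℝ) ≤ (n : ℝ) ^ s / s.factorial := Nat.choose_le_pow_div s n
    _ ≤ (Real.exp 1 * n) ^ s / (s : ℝ) ^ s := by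
        rw [div_le_div_iff₀ (by positivity) (by positivity), mul_pow]
        calc (n : ℝ) ^ s * s ^ s ≤ n ^ s * (Real.exp 1 ^ s * s.factorial) := by gcongr
          _ = _ := by ring
    _ = (Real.exp 1 * (n / s)) ^ s := by rw [← div_pow, mul_div_assoc]

theorem div_rpow_self {x : ℝ} (hx : 0 < x) (y : ℝ) : x / x ^ y = x ^ (1 - y) := by
  rw [Real.rpow_sub hx, Real.rpow_one]

theorem pow_le_rpow_mul_pow {n m s : ℕ} {r l y : ℝ} (hn : 1 ≤ n)
    (hm : m ≤ r * n * Real.log n) (hy : 1 ≤ y) (hl : Real.log y ≤ l * (s / n)) :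
    y ^ m ≤ ((n : ℝ) ^ (r * l)) ^ s := by
  have hn0 : (0 : ℝ) < n := by exact_mod_cast hn
  have : 0 < y := by linarith
  rw [← Real.log_le_log_iff (by positivity) (by positivity), Real.log_pow, Real.log_pow,
    Real.log_rpow hn0]
  calc m * Real.log y ≤ (r * n * Real.log n) * (l * (s / n)) :=
        mul_le_mul hm hl (Real.log_nonneg hy) (m.cast_nonneg.trans hm)
    _ = s * (r * l * Real.log n) := by field_simp

theorem choose_mul_pow_mul_pow_le {n d m s : ℕ} {α r l y : ℝ} (hn : 1 ≤ n)
    (hd : (n : ℝ) ^ α ≤ d) (hm : m ≤ r * n * Real.log n) (hy : 1 ≤ y)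
    (hl : Real.log y ≤ l * (s / n)) :
    (n.choose s : ℝ) * (1 / d) ^ s * y ^ m ≤
      (Real.exp 1 * (n / s) * (n : ℝ) ^ (r * l - α)) ^ s := by
  have hn0 : (0 : ℝ) < n := by exact_mod_cast hn
  calc (n.choose s : ℝ) * (1 / d) ^ s * y ^ m
      ≤ (Real.exp 1 * (n / s)) ^ s * (1 / (n : ℝ) ^ α) ^ s * ((n : ℝ) ^ (r * l)) ^ s := by
        gcongr
        · exact choose_le_exp_one_mul_div_pow n s
        · exact pow_le_rpow_mul_pow hn hm hy hl
    _ = (Real.exp 1 * (n / s) * (n : ℝ) ^ (r * l - α)) ^ s := by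
        rw [← mul_pow, ← mul_pow, Real.rpow_sub hn0]
        ring

theorem exists_agreementMoment_term_le {k : ℕ} (hk : 2 ≤ k) {α β r c : ℝ} (hr : 0 < r)
    (hc0 : 0 < c) (hc : c ≤ k - 1) (hγ : r * Real.log (1 + c) < α) (hβ : 1 - β < α) :
    ∃ K η : ℝ, 0 ≤ K ∧ 0 < η ∧ ∀ n d m s : ℕ, 1 ≤ n → (n : ℝ) ^ α ≤ d →
      m ≤ r * n * Real.log n → (n : ℝ) ^ β ≤ s → s ≤ n →
      (n.choose s : ℝ) * (1 / d) ^ s * (1 + c * ((s : ℝ) / n) ^ k) ^ m ≤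
        (K * (n : ℝ) ^ (-η)) ^ s := by
  obtain ⟨ε, hε0, hε⟩ : ∃ ε : ℝ, 0 < ε ∧ r * (c * ε) < α - (1 - β) := by
    obtain ⟨ε, hε0, hε⟩ := exists_between
      (show 0 < (α - (1 - β)) / (r * c) from div_pos (by linarith) (by positivity))
    exact ⟨ε, hε0, by rwa [lt_div_iff₀ (by positivity), mul_comm, mul_assoc] at hε⟩
  set η := min (α - (1 - β) - r * (c * ε)) (α - r * Real.log (1 + c))
  refine ⟨max (Real.exp 1) (Real.exp 1 / ε), η, le_max_of_le_left (Real.exp_pos 1).le,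
    lt_min (by linarith) (by linarith), fun n d m s hn hd hm hs hsn => ?_⟩
  have hn1 : (1 : ℝ) ≤ n := by exact_mod_cast hn
  have hn0 : (0 : ℝ) < n := by linarith
  have hs0 : (0 : ℝ) < s := (Real.rpow_pos_of_pos hn0 β).trans_le hs
  have hx0 : 0 < (s : ℝ) / n := by positivity
  have hx1 : (s : ℝ) / n ≤ 1 := div_le_one_of_le₀ (by exact_mod_cast hsn) hn0.le
  have hy : 1 ≤ 1 + c * ((s : ℝ) / n) ^ k := le_add_of_nonneg_right (by positivity)
  rcases le_total ((s : ℝ) / n) ε with hx | hx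
  · refine (choose_mul_pow_mul_pow_le hn hd hm hy
      (log_one_add_mul_pow_le_of_le hk hc0.le hx0.le hx1 hx)).trans ?_
    gcongr ?_ ^ s
    calc Real.exp 1 * (n / s) * (n : ℝ) ^ (r * (c * ε) - α)
        ≤ Real.exp 1 * (n / (n : ℝ) ^ β) * (n : ℝ) ^ (r * (c * ε) - α) := by gcongr
      _ = Real.exp 1 * (n : ℝ) ^ (-(α - (1 - β) - r * (c * ε))) := by
          rw [mul_assoc, div_rpow_self hn0, ← Real.rpow_add hn0]
          ring_nf
      _ ≤ max (Real.exp 1) (Real.exp 1 / ε) * (n : ℝ) ^ (-η) := by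
          gcongr
          exacts [le_max_left _ _, min_le_left _ _]
  · refine (choose_mul_pow_mul_pow_le hn hd hm hy
      (log_one_add_mul_pow_le hk hc0.le hc hx0.le hx1)).trans ?_
    gcongr ?_ ^ s
    calc Real.exp 1 * (n / s) * (n : ℝ) ^ (r * Real.log (1 + c) - α)
        = Real.exp 1 / (s / n) * (n : ℝ) ^ (-(α - r * Real.log (1 + c))) := by
          rw [neg_sub, div_div_eq_mul_div, mul_div_assoc]
      _ ≤ max (Real.exp 1) (Real.exp 1 / ε) * (n : ℝ) ^ (-η) := by
          gcongr
          exacts [le_max_of_le_right (by gcongr), min_le_right _ _]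

theorem sum_binomial_weights_eq_one (n : ℕ) (x : ℝ) :
    ∑ s ∈ range (n + 1), (n.choose s : ℝ) * x ^ s * (1 - x) ^ (n - s) = 1 :=
  calc ∑ s ∈ range (n + 1), (n.choose s : ℝ) * x ^ s * (1 - x) ^ (n - s)
      = ∑ s ∈ range (n + 1), x ^ s * (1 - x) ^ (n - s) * n.choose s :=
        sum_congr rfl fun s _ => by ring
    _ = 1 := by rw [← add_pow, add_sub_cancel, one_pow]

theorem sum_binomial_mul_le {n : ℕ} {x M B : ℝ} {G : ℕ → ℝ} (hx0 : 0 ≤ x) (hx1 : x ≤ 1)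
    (hM : 0 ≤ M) (hB0 : 0 ≤ B) (hB1 : B < 1) (hG : ∀ s, 0 ≤ G s)
    (h : ∀ s ≤ n, G s ≤ M ∨ 1 ≤ s ∧ (n.choose s : ℝ) * x ^ s * G s ≤ B ^ s) :
    ∑ s ∈ range (n + 1), (n.choose s : ℝ) * x ^ s * (1 - x) ^ (n - s) * G s ≤
      M + B / (1 - B) := by
  have hx1' : 0 ≤ 1 - x := sub_nonneg.2 hx1
  have term_le (s : ℕ) (hs : s ≤ n) : (n.choose s : ℝ) * x ^ s * (1 - x) ^ (n - s) * G s ≤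
      (n.choose s : ℝ) * x ^ s * (1 - x) ^ (n - s) * M + if 1 ≤ s then B ^ s else 0 := by
    rcases h s hs with hGM | ⟨hs1, hGB⟩
    · refine le_add_of_le_of_nonneg (by gcongr) ?_
      split_ifs <;> positivity
    · rw [if_pos hs1]
      refine le_add_of_nonneg_of_le (by positivity) (le_trans ?_ hGB)
      rw [mul_right_comm]
      exact mul_le_of_le_one_right (mul_nonneg (by positivity) (hG s))
        (pow_le_one₀ hx1' (sub_le_self 1 hx0))
  have geom_le : ∑ s ∈ range (n + 1), (if 1 ≤ s then B ^ s else 0) ≤ B / (1 - B) := by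
    rw [← sum_filter, show {s ∈ range (n + 1) | 1 ≤ s} = Ico 1 (n + 1) by ext; simp; omega]
    simpa using geom_sum_Ico_le_of_lt_one (m := 1) (n := n + 1) hB0 hB1
  calc ∑ s ∈ range (n + 1), (n.choose s : ℝ) * x ^ s * (1 - x) ^ (n - s) * G s
      ≤ ∑ s ∈ range (n + 1), ((n.choose s : ℝ) * x ^ s * (1 - x) ^ (n - s) * M +
          if 1 ≤ s then B ^ s else 0) :=
        sum_le_sum fun s hs => term_le s (Nat.le_of_lt_succ (mem_range.1 hs))
    _ ≤ M + B / (1 - B) := by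
        rw [sum_add_distrib, ← sum_mul, sum_binomial_weights_eq_one, one_mul]
        gcongr

theorem one_le_agreementMoment (k n m : ℕ) {c x : ℝ} (hc : 0 ≤ c) (hx0 : 0 ≤ x) (hx1 : x ≤ 1) :
    1 ≤ agreementMoment k n m c x := by
  have : 0 ≤ 1 - x := sub_nonneg.2 hx1
  rw [← sum_binomial_weights_eq_one n x]
  refine sum_le_sum fun s _ => le_mul_of_one_le_right (by positivity) (one_le_pow₀ ?_)
  exact le_add_of_nonneg_right (by positivity)

theorem one_add_mul_pow_pow_le_exp {k n m s : ℕ} {β r c : ℝ} (hn : 1 ≤ n) (hc : 0 ≤ c)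
    (hm : m ≤ r * n * Real.log n) (hs : s ≤ (n : ℝ) ^ β) :
    (1 + c * ((s : ℝ) / n) ^ k) ^ m ≤
      Real.exp (r * c * (Real.log n / (n : ℝ) ^ (k * (1 - β) - 1))) := by
  have hn0 : (0 : ℝ) < n := by exact_mod_cast hn
  have exponent_le : m * (c * ((s : ℝ) / n) ^ k) ≤
      r * c * (Real.log n / (n : ℝ) ^ (k * (1 - β) - 1)) :=
    calc m * (c * ((s : ℝ) / n) ^ k)
        ≤ r * n * Real.log n * (c * ((n : ℝ) ^ β / n) ^ k) := by
          gcongr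
          exact m.cast_nonneg.trans hm
      _ = r * c * (Real.log n / (n : ℝ) ^ (k * (1 - β) - 1)) := by
          rw [← inv_div, div_rpow_self hn0, Real.rpow_sub_one hn0.ne', mul_comm (k : ℝ),
            Real.rpow_mul_natCast hn0.le, inv_pow]
          field_simp
  calc (1 + c * ((s : ℝ) / n) ^ k) ^ m ≤ Real.exp (c * ((s : ℝ) / n) ^ k) ^ m := by
        gcongr
        linarith [Real.add_one_le_exp (c * ((s : ℝ) / n) ^ k)]
    _ = Real.exp (m * (c * ((s : ℝ) / n) ^ k)) := (Real.exp_nat_mul _ _).symm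
    _ ≤ _ := Real.exp_le_exp.2 exponent_le

end Analysis

section Asymptotics

theorem tendsto_log_div_rpow {a : ℝ} (ha : 0 < a) :
    Tendsto (fun n : ℕ => Real.log n / (n : ℝ) ^ a) atTop (𝓝 0) :=
  (isLittleO_log_rpow_atTop ha).tendsto_div_nhds_zero.comp tendsto_natCast_atTop_atTop

theorem tendsto_natCast_rpow_neg {a : ℝ} (ha : 0 < a) :
    Tendsto (fun n : ℕ => (n : ℝ) ^ (-a)) atTop (𝓝 0) :=
  (tendsto_rpow_neg_atTop ha).comp tendsto_natCast_atTop_atTop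

theorem tendsto_agreementMoment {k : ℕ} (hk : 2 ≤ k) {α r c : ℝ} {d m : ℕ → ℕ}
    (hα : 1 / (k : ℝ) < α) (hr : 0 < r) (hc0 : 0 < c) (hc : c ≤ k - 1)
    (hγ : r * Real.log (1 + c) < α) (hd : ∀ᶠ n : ℕ in atTop, (n : ℝ) ^ α ≤ d n)
    (hm : ∀ᶠ n : ℕ in atTop, m n ≤ r * n * Real.log n) :
    Tendsto (fun n => agreementMoment k n (m n) c (1 / d n)) atTop (𝓝 1) := by
  obtain ⟨β, hαβ, hβk⟩ := exists_between (sub_lt_sub_left hα 1)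
  obtain ⟨K, η, hK, hη, large_le⟩ :=
    exists_agreementMoment_term_le hk hr hc0 hc hγ (sub_lt_comm.1 hαβ)
  have hκ : 0 < k * (1 - β) - 1 := by
    have hk0 : (0 : ℝ) < k := by positivity
    linarith [(div_lt_iff₀' hk0).1 (lt_sub_comm.1 hβk)]
  set M : ℕ → ℝ := fun n => Real.exp (r * c * (Real.log n / (n : ℝ) ^ (k * (1 - β) - 1)))
  set B : ℕ → ℝ := fun n => K * (n : ℝ) ^ (-η)
  have tendsto_M : Tendsto M atTop (𝓝 1) := by
    simpa [Function.comp_def] using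
      (Real.continuous_exp.tendsto _).comp ((tendsto_log_div_rpow hκ).const_mul (r * c))
  have tendsto_B : Tendsto B atTop (𝓝 0) := by
    simpa using (tendsto_natCast_rpow_neg hη).const_mul K
  have tendsto_upper : Tendsto (fun n => M n + B n / (1 - B n)) atTop (𝓝 1) := by
    simpa using tendsto_M.add (tendsto_B.div (tendsto_B.const_sub 1) (by norm_num))
  have inv_le_one (n : ℕ) : 1 / (d n : ℝ) ≤ 1 := by simpa using Nat.cast_inv_le_one (d n)
  refine tendsto_of_tendsto_of_tendsto_of_le_of_le' tendsto_const_nhds tendsto_upper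
    (.of_forall fun n => one_le_agreementMoment k n (m n) hc0.le (by positivity) (inv_le_one n)) ?_
  filter_upwards [hd, hm, eventually_ge_atTop 1, tendsto_B.eventually_lt_const one_pos]
    with n hdn hmn hn hBn
  refine sum_binomial_mul_le (by positivity) (inv_le_one n) (Real.exp_pos _).le (by positivity) hBn
    (fun s => by positivity) fun s hs => ?_
  rcases le_total (s : ℝ) ((n : ℝ) ^ β) with hsβ | hsβ
  · exact .inl (one_add_mul_pow_pow_le_exp hn hc0.le hmn hsβ)
  · have hs0 : (0 : ℝ) < s := (by positivity : (0 : ℝ) < (n : ℝ) ^ β).trans_le hsβ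
    exact .inr ⟨by exact_mod_cast hs0, large_le n (d n) (m n) s hn hdn hmn hsβ hs⟩

theorem le_dOf (α : ℝ) (n : ℕ) : (n : ℝ) ^ α ≤ dOf α n := Nat.le_ceil _

theorem qOf_le {p : ℝ} (hp : p ≤ 1) (k d : ℕ) : qOf p k d ≤ d ^ k := by
  rw [qOf, Nat.ceil_le, Nat.cast_pow]
  exact mul_le_of_le_one_left (by positivity) hp

theorem tendsto_dOf {α : ℝ} (hα : 0 < α) : Tendsto (dOf α) atTop atTop :=
  tendsto_nat_ceil_atTop.comp ((tendsto_rpow_atTop hα).comp tendsto_natCast_atTop_atTop)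

theorem tendsto_qOf_div_pow {p : ℝ} (hp : 0 ≤ p) {k : ℕ} (hk : k ≠ 0) :
    Tendsto (fun d : ℕ => (qOf p k d : ℝ) / (d : ℝ) ^ k) atTop (𝓝 p) :=
  (tendsto_nat_ceil_mul_div_atTop hp).comp
    ((tendsto_pow_atTop hk).comp tendsto_natCast_atTop_atTop)

theorem eventually_mOf_le {r r' : ℝ} (hr : 0 ≤ r) (hrr' : r < r') :
    ∀ᶠ n : ℕ in atTop, mOf r n ≤ r' * n * Real.log n := by
  have tendsto_atTop : Tendsto (fun n : ℕ => (n : ℝ) * Real.log n) atTop atTop :=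
    tendsto_natCast_atTop_atTop.atTop_mul_atTop₀
      (Real.tendsto_log_atTop.comp tendsto_natCast_atTop_atTop)
  filter_upwards [((tendsto_nat_ceil_mul_div_atTop hr).comp tendsto_atTop).eventually_lt_const
    hrr', tendsto_atTop.eventually_gt_atTop 0] with n hn hpos
  simpa only [mOf, mul_assoc] using ((div_lt_iff₀ hpos).1 hn).le

theorem inv_one_sub_lt_min {k : ℕ} (hk : k ≠ 0) {α r p : ℝ} (hpk : p < ((k : ℝ) - 1) / k)
    (hp : p < 1 - Real.exp (-α / r)) : (1 - p)⁻¹ < min (k : ℝ) (Real.exp (α / r)) := by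
  have hk0 : (0 : ℝ) < k := by positivity
  refine lt_min (inv_lt_of_inv_lt₀ hk0 ?_) (inv_lt_of_inv_lt₀ (Real.exp_pos _) ?_)
  · rw [sub_div, div_self hk0.ne', one_div] at hpk
    linarith
  · rw [← Real.exp_neg, ← neg_div]
    linarith

theorem tendsto_prSatRB_one {k : ℕ} (hk : 2 ≤ k) {α r p : ℝ} (hα : 1 / (k : ℝ) < α) (hr : 0 < r)
    (hp0 : 0 ≤ p) (hpk : p < ((k : ℝ) - 1) / k) (hp : p < 1 - Real.exp (-α / r)) :
    Tendsto (prSatRB k α r p) atTop (𝓝 1) := by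
  have hα0 : 0 < α := (by positivity : (0 : ℝ) < 1 / k).trans hα
  have hp1 : p < 1 := by linarith [Real.exp_pos (-α / r)]
  -- The gaps around `C` and `r'` absorb the ceilings in the numbers `q` and `m` respectively.
  obtain ⟨C, hpC, hC⟩ := exists_between (inv_one_sub_lt_min (by omega) hpk hp)
  have hC1 : 1 < C := ((one_le_inv₀ (by linarith)).2 (by linarith)).trans_lt hpC
  have hlogC : Real.log C < α / r :=
    (Real.log_lt_iff_lt_exp (by linarith)).2 (hC.trans_le (min_le_right _ _))
  obtain ⟨r', hrr', hr'⟩ := exists_between ((lt_div_comm₀ (Real.log_pos hC1) hr).1 hlogC)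
  have tendsto_moment :=
    tendsto_agreementMoment hk (d := dOf α) (m := mOf r) hα (hr.trans hrr') (sub_pos.2 hC1)
      (sub_le_sub_right (hC.le.trans (min_le_left _ _)) 1)
      (by rwa [add_sub_cancel, ← lt_div_iff₀ (Real.log_pos hC1)])
      (.of_forall (le_dOf α)) (eventually_mOf_le hr.le hrr')
  have tendsto_mul_one_sub :
      Tendsto (fun n => C * (1 - (qOf p k (dOf α n) : ℝ) / (dOf α n : ℝ) ^ k)) atTop
        (𝓝 (C * (1 - p))) :=
    (((tendsto_qOf_div_pow hp0 (by omega)).comp (tendsto_dOf hα0)).const_sub 1).const_mul C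
  have tendsto_inv := tendsto_moment.inv₀ one_ne_zero
  rw [inv_one] at tendsto_inv
  refine tendsto_of_tendsto_of_tendsto_of_le_of_le' tendsto_inv tendsto_const_nhds ?_
    (.of_forall fun n => prSat_le_one _ _ _ _ _)
  filter_upwards [eventually_ge_atTop k, (tendsto_dOf hα0).eventually_gt_atTop 0,
    tendsto_mul_one_sub.eventually_const_le ((inv_lt_iff_one_lt_mul₀ (by linarith)).1 hpC),
    tendsto_moment.eventually_const_lt one_pos] with n hkn hd hCn hpos
  rw [inv_le_iff_one_le_mul₀ hpos]
  exact one_le_prSat_mul_agreementMoment (mOf r n) hd hkn (qOf_le hp1.le k _) (sub_pos.2 hC1).le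
    (by rwa [add_sub_cancel])

theorem prSatRB_le {k n : ℕ} {α r p : ℝ} (hα : 0 ≤ α) (hp0 : 0 ≤ p) (hp1 : p < 1) (hn : 1 ≤ n)
    (hk : k ≤ n) :
    prSatRB k α r p n ≤ (2 * (n : ℝ) ^ (α + r * Real.log (1 - p))) ^ n := by
  have hn1 : (1 : ℝ) ≤ n := by exact_mod_cast hn
  have hn0 : (0 : ℝ) < n := by linarith
  have hp : 0 < 1 - p := sub_pos.2 hp1
  have hd0 : (0 : ℝ) < dOf α n := (by positivity : (0 : ℝ) < (n : ℝ) ^ α).trans_le (le_dOf α n)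
  have hd : (dOf α n : ℝ) ≤ 2 * (n : ℝ) ^ α :=
    Nat.ceil_le_two_mul (by linarith [Real.one_le_rpow hn1 hα])
  have hq : (qOf p k (dOf α n) : ℝ) / (dOf α n : ℝ) ^ k ≤ 1 :=
    div_le_one_of_le₀ (by exact_mod_cast qOf_le hp1.le k _) (by positivity)
  have hpq : p ≤ (qOf p k (dOf α n) : ℝ) / (dOf α n : ℝ) ^ k :=
    (le_div_iff₀ (by positivity)).2 (Nat.le_ceil _)
  calc prSatRB k α r p n
      ≤ (dOf α n : ℝ) ^ n * (1 - (qOf p k (dOf α n) : ℝ) / (dOf α n : ℝ) ^ k) ^ mOf r n :=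
        prSat_le_first_moment _ hk (qOf_le hp1.le k _)
    _ ≤ (2 * (n : ℝ) ^ α) ^ n * (1 - p) ^ mOf r n := by
        have := sub_nonneg.2 hq
        gcongr
    _ ≤ (2 * (n : ℝ) ^ α) ^ n * (1 - p) ^ (r * n * Real.log n) := by
        rw [← Real.rpow_natCast (1 - p)]
        gcongr ?_ * ?_
        exact Real.rpow_le_rpow_of_exponent_ge hp (by linarith) (Nat.le_ceil _)
    _ = (2 * (n : ℝ) ^ (α + r * Real.log (1 - p))) ^ n := by
        have rpow_eq : (1 - p) ^ (r * n * Real.log n) = ((n : ℝ) ^ (r * Real.log (1 - p))) ^ n := by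
          rw [← Real.rpow_mul_natCast hn0.le, Real.rpow_def_of_pos hp, Real.rpow_def_of_pos hn0]
          ring_nf
        rw [rpow_eq, ← mul_pow, mul_assoc, ← Real.rpow_add hn0]

theorem tendsto_prSatRB_zero (k : ℕ) {α r p : ℝ} (hα : 0 ≤ α) (hr : 0 < r) (hp1 : p < 1)
    (hp : 1 - Real.exp (-α / r) < p) : Tendsto (prSatRB k α r p) atTop (𝓝 0) := by
  have hp0 : 0 ≤ p := by
    have : Real.exp (-α / r) ≤ 1 :=
      Real.exp_le_one_iff.2 (div_nonpos_of_nonpos_of_nonneg (neg_nonpos.2 hα) hr.le)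
    linarith
  have exponent_neg : α + r * Real.log (1 - p) < 0 := by
    have : Real.log (1 - p) < -α / r :=
      (Real.log_lt_iff_lt_exp (sub_pos.2 hp1)).2 (by linarith)
    rw [lt_div_iff₀' hr] at this
    linarith
  have tendsto_base :
      Tendsto (fun n : ℕ => 2 * (n : ℝ) ^ (α + r * Real.log (1 - p))) atTop (𝓝 0) := by
    simpa using (tendsto_natCast_rpow_neg (neg_pos.2 exponent_neg)).const_mul 2
  refine squeeze_zero' (.of_forall fun n => prSat_nonneg _ _ _ _ _) ?_ tendsto_base
  filter_upwards [eventually_ge_atTop 1, eventually_ge_atTop k,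
    tendsto_base.eventually_le_const one_pos] with n hn hkn hbase
  exact (prSatRB_le hα hp0 hp1 hn hkn).trans (pow_le_of_le_one (by positivity) hbase (by omega))

end Asymptotics

end RB

theorem rb_phase_transition_in_p_general (k : ℕ) (hk : 2 ≤ k) (α r : ℝ)
    (hα : 1 / (k : ℝ) < α) (hr : 0 < r) (p : ℝ) (hp0 : 0 < p) (hp1 : p < 1) :
    (p < ((k : ℝ) - 1) / k → p < 1 - Real.exp (-α / r) →
      Tendsto (fun n : ℕ => RB.prSatRB k α r p n) atTop (𝓝 1)) ∧
    (1 - Real.exp (-α / r) < p →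
      Tendsto (fun n : ℕ => RB.prSatRB k α r p n) atTop (𝓝 0)) :=
  ⟨RB.tendsto_prSatRB_one hk hα hr hp0.le,
    RB.tendsto_prSatRB_zero k ((by positivity : (0 : ℝ) ≤ 1 / k).trans hα.le) hr hp1⟩

/-- **Phase transition of model RB in the tightness `p`** (Theorem 2):
for an integer `k ≥ 2` and real constants `α > 1/k` and `r > 0` such that
`p_cr := 1 - e^(-α/r)` satisfies `p_cr ≤ (k-1)/k`, the probability that a random
instance of `RB(k,n,α,r,p)` with constant `p ∈ (0,1)` is satisfiable tends,
as `n → ∞`, to `1` if `p < p_cr` and to `0` if `p > p_cr`. -/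
theorem rb_phase_transition_in_p (k : ℕ) (hk : 2 ≤ k) (α r : ℝ)
    (hα : 1 / (k : ℝ) < α) (hr : 0 < r)
    (hpcr : 1 - Real.exp (-α / r) ≤ ((k : ℝ) - 1) / k)
    (p : ℝ) (hp0 : 0 < p) (hp1 : p < 1) :
    (p < 1 - Real.exp (-α / r) →
      Tendsto (fun n : ℕ => RB.prSatRB k α r p n) atTop (𝓝 1)) ∧
    (1 - Real.exp (-α / r) < p →
      Tendsto (fun n : ℕ => RB.prSatRB k α r p n) atTop (𝓝 0)) := by
  have h := rb_phase_transition_in_p_general k hk α r hα hr p hp0 hp1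
  exact ⟨fun hp => h.1 (hp.trans_le hpcr) hp, h.2⟩
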